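/- arXiv:1602.02971 — 2 statements merged into one kernel-verified Lean document; each statement's English description precedes it below -/
import Mathlib

section
/- 2-adic coding of skeleton geodesics: let ε : ℕ → {0,1} and define a sequence of rationals by γ₁ = 1/2 and γ_{n+1} = γ_n/2 + ε_n/2 for n ≥ 1. Then padicNorm 2 (γ_n) = 2^n for every n ≥ 1, and the sequence of rational numbers 2^n·γ_n, viewed in the field ℚ₂ of 2-adic numbers, converges to the 2-adic integer x = 1 + ∑_{n=1}^∞ ε_n·2^n, which has 2-adic norm ‖x‖ = 1. -/
open Filter

/-!
Scaling the recursion `γ_{n+1} = (γ_n + ε_n) / p` by `p ^ (n + 1)` telescopes it, so that `pⁿ γ_n`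
is a partial sum of `p γ₁ + ∑ ε_i pⁱ`. With `p`-integral digits every term after the first has norm
`< 1`, so by the strong triangle inequality every partial sum, and hence the limit, has the norm
of the leading term `p γ₁`, which is `1`.
-/

/-- The recursion `γ (n + 1) = (γ n + ε n) / π` for `n ≥ 1`, which prepends the digit `ε n` to a
base-`π` expansion. It is stated without division so as to make sense in any semiring. -/
def IsDigitRecursion {R : Type*} [Semiring R] (π : R) (ε γ : ℕ → R) : Prop :=
  ∀ n, 1 ≤ n → π * γ (n + 1) = γ n + ε n

theorem norm_mul_pow_le_of_norm_le_one {R : Type*} [SeminormedRing R] {a : R} (ha : ‖a‖ ≤ 1) (π : R)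
    {n : ℕ} (hn : 1 ≤ n) : ‖a * π ^ n‖ ≤ ‖π‖ ^ n :=
  calc ‖a * π ^ n‖ ≤ ‖a‖ * ‖π ^ n‖ := norm_mul_le _ _
    _ ≤ 1 * ‖π‖ ^ n := by gcongr; exact norm_pow_le' π hn
    _ = ‖π‖ ^ n := one_mul _

theorem summable_mul_pow_succ_of_norm_le_one {R : Type*} [SeminormedRing R] [CompleteSpace R]
    {π : R} {ε : ℕ → R} (hπ : ‖π‖ < 1) (hε : ∀ n, ‖ε n‖ ≤ 1) :
    Summable fun n ↦ ε n * π ^ (n + 1) := by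
  have hgeom : Summable fun n : ℕ ↦ ‖π‖ ^ (n + 1) :=
    (summable_nat_add_iff 1).2 (summable_geometric_of_lt_one (norm_nonneg π) hπ)
  exact hgeom.of_norm_bounded fun n ↦ norm_mul_pow_le_of_norm_le_one (hε n) π n.succ_pos

namespace IsDigitRecursion

theorem pow_succ_mul_succ {R : Type*} [CommSemiring R] {π : R} {ε γ : ℕ → R}
    (h : IsDigitRecursion π ε γ) {n : ℕ} (hn : 1 ≤ n) :
    π ^ (n + 1) * γ (n + 1) = π ^ n * γ n + ε n * π ^ n := by
  rw [pow_succ, mul_assoc, h n hn]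
  ring

theorem pow_succ_mul_eq_add_sum {R : Type*} [CommSemiring R] {π : R} {ε γ : ℕ → R}
    (h : IsDigitRecursion π ε γ) (n : ℕ) :
    π ^ (n + 1) * γ (n + 1) = π * γ 1 + ∑ i ∈ Finset.range n, ε (i + 1) * π ^ (i + 1) := by
  induction n with
  | zero => simp
  | succ n ih => rw [h.pow_succ_mul_succ n.succ_pos, ih, Finset.sum_range_succ, add_assoc]

section Normed

variable {R : Type*} [SeminormedCommRing R] {π : R} {ε γ : ℕ → R}

theorem norm_pow_mul_eq_one [IsUltrametricDist R] (h : IsDigitRecursion π ε γ) (hπ : ‖π‖ < 1)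
    (hε : ∀ n, 1 ≤ n → ‖ε n‖ ≤ 1) (hγ₁ : ‖π * γ 1‖ = 1) {n : ℕ} (hn : 1 ≤ n) :
    ‖π ^ n * γ n‖ = 1 := by
  induction n, hn using Nat.le_induction with
  | base => rwa [pow_one]
  | succ n hn ih =>
    have hdigit : ‖ε n * π ^ n‖ < 1 :=
      (norm_mul_pow_le_of_norm_le_one (hε n hn) π hn).trans_lt
        (pow_lt_one₀ (norm_nonneg π) hπ (by omega))
    have hne : ‖π ^ n * γ n‖ ≠ ‖ε n * π ^ n‖ := ih ▸ hdigit.ne'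
    rw [h.pow_succ_mul_succ hn, IsUltrametricDist.norm_add_eq_max_of_norm_ne_norm hne, ih,
      max_eq_left hdigit.le]

theorem norm_eq_inv_norm_pow [NormOneClass R] [NormMulClass R] [IsUltrametricDist R]
    (h : IsDigitRecursion π ε γ) (hπ : ‖π‖ < 1) (hε : ∀ n, 1 ≤ n → ‖ε n‖ ≤ 1)
    (hγ₁ : ‖π * γ 1‖ = 1) {n : ℕ} (hn : 1 ≤ n) : ‖γ n‖ = ‖π‖⁻¹ ^ n := by
  rw [inv_pow, ← norm_pow]
  refine eq_inv_of_mul_eq_one_right ?_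
  rw [← norm_mul, h.norm_pow_mul_eq_one hπ hε hγ₁ hn]

theorem tendsto_pow_mul [CompleteSpace R] (h : IsDigitRecursion π ε γ) (hπ : ‖π‖ < 1)
    (hε : ∀ n, 1 ≤ n → ‖ε n‖ ≤ 1) :
    Tendsto (fun n ↦ π ^ n * γ n) atTop
      (nhds (π * γ 1 + ∑' n, ε (n + 1) * π ^ (n + 1))) := by
  rw [← tendsto_add_atTop_iff_nat 1]
  simp only [h.pow_succ_mul_eq_add_sum]
  have hsum := summable_mul_pow_succ_of_norm_le_one hπ fun n ↦ hε (n + 1) n.succ_pos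
  exact hsum.hasSum.tendsto_sum_nat.const_add _

theorem norm_add_tsum_eq_one [CompleteSpace R] [IsUltrametricDist R]
    (h : IsDigitRecursion π ε γ) (hπ : ‖π‖ < 1) (hε : ∀ n, 1 ≤ n → ‖ε n‖ ≤ 1)
    (hγ₁ : ‖π * γ 1‖ = 1) : ‖π * γ 1 + ∑' n, ε (n + 1) * π ^ (n + 1)‖ = 1 := by
  refine tendsto_nhds_unique_of_eventuallyEq (h.tendsto_pow_mul hπ hε).norm tendsto_const_nhds ?_
  filter_upwards [eventually_ge_atTop 1] with n hn
  exact h.norm_pow_mul_eq_one hπ hε hγ₁ hn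

end Normed

end IsDigitRecursion

theorem padicNorm_one_div_prime {p : ℕ} [Fact p.Prime] : padicNorm p (1 / p) = p := by
  rw [padicNorm.div, padicNorm.one, padicNorm.padicNorm_p_of_prime, one_div, inv_inv]

theorem two_adic_coding_of_skeleton_geodesics_general {p : ℕ} [Fact p.Prime] {ε γ : ℕ → ℚ}
    (hε : ∀ n, 1 ≤ n → padicNorm p (ε n) ≤ 1) (hγ₁ : padicNorm p (γ 1) = p)
    (hrec : ∀ n, 1 ≤ n → γ (n + 1) = γ n / p + ε n / p) :
    (∀ n, 1 ≤ n → padicNorm p (γ n) = p ^ n) ∧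
    ∃ x : ℚ_[p],
      Tendsto (fun n : ℕ => ((p ^ n * γ n : ℚ) : ℚ_[p])) atTop (nhds x) ∧
      x = p * γ 1 + ∑' n : ℕ, ((ε (n + 1) : ℚ) : ℚ_[p]) * p ^ (n + 1) ∧
      ‖x‖ = 1 := by
  have hp : (p : ℚ) ≠ 0 := mod_cast (Fact.out : p.Prime).ne_zero
  have hdigits : IsDigitRecursion (p : ℚ_[p]) (fun n ↦ (ε n : ℚ_[p])) (fun n ↦ (γ n : ℚ_[p])) := by
    intro n hn
    beta_reduce
    have hscaled : (p : ℚ) * γ (n + 1) = γ n + ε n := by rw [hrec n hn]; field_simp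
    exact_mod_cast hscaled
  have hε' : ∀ n, 1 ≤ n → ‖(ε n : ℚ_[p])‖ ≤ 1 := fun n hn ↦ by
    rw [Padic.eq_padicNorm]
    exact_mod_cast hε n hn
  have hγ₁' : ‖(p : ℚ_[p]) * (γ 1 : ℚ_[p])‖ = 1 := by
    rw [norm_mul, Padic.norm_p, Padic.eq_padicNorm, hγ₁, Rat.cast_natCast]
    exact inv_mul_cancel₀ (mod_cast hp)
  refine ⟨fun n hn ↦ ?_, _, ?_, rfl, hdigits.norm_add_tsum_eq_one Padic.norm_p_lt_one hε' hγ₁'⟩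
  · have hnorm := hdigits.norm_eq_inv_norm_pow Padic.norm_p_lt_one hε' hγ₁' hn
    rw [Padic.eq_padicNorm, Padic.norm_p, inv_inv] at hnorm
    exact_mod_cast hnorm
  · simpa only [Rat.cast_mul, Rat.cast_pow, Rat.cast_natCast] using
      hdigits.tendsto_pow_mul Padic.norm_p_lt_one hε'

/-- 2-adic coding of skeleton geodesics: if `γ₁ = 1/2` and `γ_{n+1} = γ_n/2 + ε_n/2` for a
sequence of digits `ε_n ∈ {0,1}` (n ≥ 1), then `|γ_n|₂ = 2ⁿ` for all `n ≥ 1`, and in `ℚ₂`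
the sequence `2ⁿ·γ_n` converges to the 2-adic integer `1 + ∑_{n≥1} ε_n 2ⁿ`, which has
2-adic norm `1`. -/
theorem two_adic_coding_of_skeleton_geodesics
    (ε : ℕ → ℚ) (hε : ∀ n, ε n = 0 ∨ ε n = 1)
    (γ : ℕ → ℚ) (hγ₁ : γ 1 = 1 / 2)
    (hrec : ∀ n, 1 ≤ n → γ (n + 1) = γ n / 2 + ε n / 2) :
    (∀ n, 1 ≤ n → padicNorm 2 (γ n) = 2 ^ n) ∧
    ∃ x : ℚ_[2],
      Tendsto (fun n : ℕ => ((2 ^ n * γ n : ℚ) : ℚ_[2])) atTop (nhds x) ∧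
      x = 1 + ∑' n : ℕ, ((ε (n + 1) : ℚ) : ℚ_[2]) * 2 ^ (n + 1) ∧
      ‖x‖ = 1 := by
  have hdigit (n : ℕ) : padicNorm 2 (ε n) ≤ 1 := by rcases hε n with h | h <;> simp [h]
  have hγ₁' : padicNorm 2 (γ 1) = (2 : ℕ) := hγ₁ ▸ padicNorm_one_div_prime (p := 2)
  simpa [hγ₁] using
    two_adic_coding_of_skeleton_geodesics_general (fun n _ ↦ hdigit n) hγ₁' hrec
end

section
/- The interval [0,1) is recurrent for the simple random walk on the Schreier graph Γ: for the walk started at γ₀ = 0, almost surely there are infinitely many n with 0 ≤ γ_n < 1. -/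
open MeasureTheory Filter

noncomputable section

/-- The four one-step moves of the simple random walk on the Schreier graph `Γ ≅ ℤ[1/2]`,
acting on rationals: `Ã`, `Ã⁻¹`, `B̃` and `B̃⁻¹` in this order. -/
def stepQ : Fin 4 → ℚ → ℚ
  | 0 => fun x => x - 1
  | 1 => fun x => x + 1
  | 2 => fun x => if x ≤ 0 then x else if x ≤ 2 then x / 2 else x - 1
  | 3 => fun x => if x ≤ 0 then x else if x ≤ 1 then 2 * x else x + 1

/-- The trajectory of the simple random walk on `Γ` driven by the sequence of choices `s`,
started at `γ₀`: at each step one of the four maps `Ã, Ã⁻¹, B̃, B̃⁻¹` is applied. -/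
def walkQ (s : ℕ → Fin 4) (γ₀ : ℚ) : ℕ → ℚ
  | 0 => γ₀
  | n + 1 => stepQ (s n) (walkQ s γ₀ n)

/-- The set `ℤ[1/2] ⊆ ℚ` of dyadic rational numbers. -/
def DyadicQ : Set ℚ := {x | ∃ (k : ℤ) (m : ℕ), x = (k : ℚ) / 2 ^ m}

/-!
Away from `[0, 1)` the integer part of the walk is itself a random walk with independent increments,
uniform on `(-1, 1, -1, 1)` to the right of the interval and on `(-1, 1, 0, 0)` to its left.  Both
increments are centred, so the corresponding sums are martingales with bounded differences.  Such a
martingale converges on the event that it is bounded below, which forces its increments to tend to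
zero; independence makes nonzero increments recur, so almost surely the right-hand sum is unbounded
below and, by symmetry, the left-hand one unbounded above.  As the integer part moves by at most one
unit at a time, it must then come back to `0`.
-/

open ProbabilityTheory Topology
open scoped NNReal ENNReal

section IndependentSequences

variable {Ω : Type*} [MeasurableSpace Ω] {P : Measure Ω}

lemma hasLaw_infinitePi_of_measure_cylinder {α : Type*} [Countable α] [MeasurableSpace α]
    [MeasurableSingletonClass α] {ν : Measure α} [IsProbabilityMeasure ν] {s : ℕ → Ω → α}
    (hs : ∀ n, Measurable (s n))
    (hcyl : ∀ (n : ℕ) (c : ℕ → α),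
      P {ω | ∀ i < n, s i ω = c i} = ∏ i ∈ Finset.range n, ν {c i}) :
    HasLaw (fun ω i ↦ s i ω) (Measure.infinitePi fun _ : ℕ ↦ ν) P where
  aemeasurable := (measurable_pi_lambda _ hs).aemeasurable
  map_eq := by
    have hseq : Measurable fun ω i ↦ s i ω := measurable_pi_lambda _ hs
    have hproj : IsProjectiveLimit (P.map fun ω i ↦ s i ω)
        fun I : Finset ℕ ↦ Measure.pi fun _ : I ↦ ν := by
      refine (isProjectiveLimit_nat_iff (isProjectiveMeasureFamily_pi fun _ ↦ ν) _).2 fun n ↦ ?_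
      refine Measure.ext_of_singleton fun c₀ ↦ ?_
      have : Nonempty α := ⟨c₀ ⟨0, by simp⟩⟩
      obtain ⟨c, rfl⟩ := Subtype.val_injective.surjective_comp_right c₀
      have hset : (fun ω i ↦ s i ω) ⁻¹' (Preorder.frestrictLe n ⁻¹' {c ∘ Subtype.val})
          = {ω | ∀ i < n + 1, s i ω = c i} := by
        ext ω
        simp [funext_iff]
      rw [Measure.map_apply (by fun_prop) (measurableSet_singleton _),
        Measure.map_apply hseq ((measurableSet_singleton _).preimage (by fun_prop)), hset, hcyl,
        Measure.pi_singleton, Nat.range_succ_eq_Iic, ← Finset.prod_coe_sort]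
      rfl
    exact hproj.unique (Measure.isProjectiveLimit_infinitePi _)

lemma ae_frequently_mem_of_iIndepFun {β : Type*} [MeasurableSpace β] {X : ℕ → Ω → β}
    (hX : ∀ n, Measurable (X n)) (hind : iIndepFun X P) {A : ℕ → Set β}
    (hA : ∀ n, MeasurableSet (A n)) (hsum : ∑' n, P (X n ⁻¹' A n) = ∞) :
    ∀ᵐ ω ∂P, ∃ᶠ n in atTop, X n ω ∈ A n := by
  have := hind.isProbabilityMeasure
  have hmeas (n : ℕ) : MeasurableSet (X n ⁻¹' A n) := hX n (hA n)
  have hindSet : iIndepSet (fun n ↦ X n ⁻¹' A n) P :=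
    (iIndepSet_iff_meas_biInter hmeas).2 fun t ↦
      hind.measure_inter_preimage_eq_mul t fun n _ ↦ hA n
  have hlimsup := (mem_ae_iff_prob_eq_one (.measurableSet_limsup hmeas)).2
    (measure_limsup_eq_one hmeas hindSet hsum)
  filter_upwards [hlimsup] with ω hω
  exact mem_limsup_iff_frequently_mem.1 hω

variable {X : ℕ → Ω → ℝ}

lemma martingale_sum_of_iIndepFun (hX : ∀ n, StronglyMeasurable (X n)) (hind : iIndepFun X P)
    (hint : ∀ n, Integrable (X n) P) (hmean : ∀ n, P[X n] = 0) :
    Martingale (fun n ↦ ∑ i ∈ Finset.range (n + 1), X i) (Filtration.natural X hX) P := by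
  have := hind.isProbabilityMeasure
  have hadapted : StronglyAdapted (Filtration.natural X hX)
      fun n ↦ ∑ i ∈ Finset.range (n + 1), X i := fun n ↦
    Finset.stronglyMeasurable_sum _ fun i hi ↦
      (Filtration.stronglyAdapted_natural hX).stronglyMeasurable_le
        (Nat.lt_succ_iff.1 (Finset.mem_range.1 hi))
  have hsum_int (n : ℕ) : Integrable (∑ i ∈ Finset.range (n + 1), X i) P :=
    integrable_finsetSum' _ fun i _ ↦ hint i
  refine martingale_nat hadapted hsum_int fun n ↦ ?_
  have hpast := condExp_of_stronglyMeasurable ((Filtration.natural X hX).le n) (hadapted n)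
    (hsum_int n)
  have hnext := hind.condExp_natural_ae_eq_of_lt hX n.lt_succ_self
  have hadd := condExp_add (hsum_int n) (hint (n + 1)) (Filtration.natural X hX n)
  rw [Finset.sum_range_succ _ (n + 1)]
  filter_upwards [hadd, hnext] with ω hadd hnext
  rw [hadd, Pi.add_apply, hpast, hnext, hmean, add_zero]

lemma ae_tendsto_zero_of_bddBelow_sum (hX : ∀ n, Measurable (X n)) (hind : iIndepFun X P)
    {R : ℝ≥0} (hbdd : ∀ n, ∀ᵐ ω ∂P, |X n ω| ≤ R) (hmean : ∀ n, P[X n] = 0) :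
    ∀ᵐ ω ∂P, BddBelow (Set.range fun n ↦ ∑ i ∈ Finset.range n, X i ω) →
      Tendsto (fun n ↦ X n ω) atTop (𝓝 0) := by
  have := hind.isProbabilityMeasure
  have hmart := martingale_sum_of_iIndepFun (fun n ↦ (hX n).stronglyMeasurable) hind
    (fun n ↦ .of_bound (hX n).aestronglyMeasurable R (hbdd n)) hmean
  have hdiff : ∀ᵐ ω ∂P, ∀ n, |(∑ i ∈ Finset.range (n + 1 + 1), X i) ω
      - (∑ i ∈ Finset.range (n + 1), X i) ω| ≤ R := by
    filter_upwards [ae_all_iff.2 hbdd] with ω hω n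
    simpa [Finset.sum_range_succ _ (n + 1)] using hω (n + 1)
  filter_upwards [hmart.bddAbove_range_iff_bddBelow_range hdiff,
    hmart.submartingale.bddAbove_iff_exists_tendsto hdiff] with ω hsymm hconv hbelow
  simp only [Finset.sum_apply] at hsymm hconv
  obtain ⟨c, hc⟩ := hconv.1 <| hsymm.2 <| hbelow.mono <|
    Set.range_comp_subset_range (· + 1) fun n ↦ ∑ i ∈ Finset.range n, X i ω
  have hS : Tendsto (fun n ↦ ∑ i ∈ Finset.range n, X i ω) atTop (𝓝 c) :=
    (tendsto_add_atTop_iff_nat 1).1 hc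
  simpa [Finset.sum_range_succ] using hc.sub hS

lemma ae_not_bddBelow_sum_of_hasLaw {ν : Measure ℝ} (hX : ∀ n, Measurable (X n))
    (hind : iIndepFun X P) (hlaw : ∀ n, HasLaw (X n) ν P) {R : ℝ≥0}
    (hbdd : ∀ᵐ x : ℝ ∂ν, |x| ≤ R) (hmean : ∫ x, x ∂ν = 0) (hν : ν {0}ᶜ ≠ 0) :
    ∀ᵐ ω ∂P, ¬BddBelow (Set.range fun n ↦ ∑ i ∈ Finset.range n, X i ω) := by
  obtain ⟨k, hk⟩ : ∃ k : ℕ, ν {x | 1 / ((k : ℝ) + 1) < |x|} ≠ 0 := by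
    contrapose! hν
    refine measure_mono_null (fun x hx ↦ ?_) (measure_iUnion_null hν)
    exact Set.mem_iUnion.2 (exists_nat_one_div_lt (abs_pos.2 hx))
  have hmeas : MeasurableSet {x : ℝ | 1 / ((k : ℝ) + 1) < |x|} :=
    measurableSet_lt measurable_const (by fun_prop)
  have hfreq := ae_frequently_mem_of_iIndepFun hX hind (fun _ ↦ hmeas) <| by
    simpa only [← Measure.map_apply (hX _) hmeas, (hlaw _).map_eq] using
      ENNReal.tsum_const_eq_top_of_ne_zero hk
  have hbdd' (n : ℕ) : ∀ᵐ ω ∂P, |X n ω| ≤ R :=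
    (ae_map_iff (hX n).aemeasurable (measurableSet_le (by fun_prop) (by fun_prop))).1
      ((hlaw n).map_eq ▸ hbdd)
  filter_upwards [hfreq, ae_tendsto_zero_of_bddBelow_sum hX hind hbdd'
    fun n ↦ (hlaw n).integral_eq.trans hmean] with ω hω hlim hbelow
  have hsmall := (hlim hbelow).abs.eventually_lt_const
    (show |(0 : ℝ)| < 1 / ((k : ℝ) + 1) by rw [abs_zero]; positivity)
  obtain ⟨n, hlarge, hn⟩ := (hω.and_eventually hsmall).exists
  exact hlarge.not_gt hn

lemma ae_not_bddBelow_sum_of_uniform {α : Type*} [Fintype α] [MeasurableSpace α]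
    [MeasurableSingletonClass α] {s : ℕ → Ω → α}
    (hs : ∀ n, Measurable (s n))
    (hcyl : ∀ (n : ℕ) (c : ℕ → α),
      P {ω | ∀ i < n, s i ω = c i} = (Fintype.card α : ℝ≥0∞)⁻¹ ^ n)
    {f : α → ℝ} (hf : ∑ a, f a = 0) (hf0 : f ≠ 0) :
    ∀ᵐ ω ∂P, ¬BddBelow (Set.range fun n ↦ ∑ i ∈ Finset.range n, f (s i ω)) := by
  obtain ⟨a, ha⟩ := Function.ne_iff.1 hf0
  have : Nonempty α := ⟨a⟩
  let ν := (PMF.uniformOfFintype α).toMeasure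
  have hν (b : α) : ν {b} = (Fintype.card α : ℝ≥0∞)⁻¹ := by
    rw [PMF.toMeasure_apply_singleton _ _ (measurableSet_singleton b),
      PMF.uniformOfFintype_apply]
  have hfm : Measurable f := measurable_of_finite f
  have hseq : HasLaw (fun ω i ↦ s i ω) (Measure.infinitePi fun _ : ℕ ↦ ν) P :=
    hasLaw_infinitePi_of_measure_cylinder hs fun n c ↦ by simp [hcyl, hν]
  have := hseq.isProbabilityMeasure
  have hlaw (n : ℕ) : HasLaw (s n) ν P :=
    (measurePreserving_eval_infinitePi (fun _ : ℕ ↦ ν) n).hasLaw.comp hseq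
  have hind : iIndepFun s P :=
    (iIndepFun_iff_hasLaw_Pi_infinitePi hlaw hseq.aemeasurable).2 hseq
  refine ae_not_bddBelow_sum_of_hasLaw (ν := ν.map f) (R := ∑ b, ‖f b‖₊)
    (fun n ↦ hfm.comp (hs n)) (hind.comp (fun _ ↦ f) fun _ ↦ hfm)
    (fun n ↦ (HasLaw.mk hfm.aemeasurable rfl).comp (hlaw n)) ?_ ?_ ?_
  · refine (ae_map_iff hfm.aemeasurable (measurableSet_le (by fun_prop) (by fun_prop))).2
      (ae_of_all _ fun b ↦ ?_)
    push_cast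
    exact Finset.single_le_sum (f := fun b ↦ ‖f b‖) (fun _ _ ↦ norm_nonneg _) (Finset.mem_univ b)
  · rw [integral_map hfm.aemeasurable (by fun_prop), PMF.integral_eq_sum]
    simp [← Finset.mul_sum, hf]
  · rw [Measure.map_apply hfm (measurableSet_singleton 0).compl]
    refine fun h ↦ (ENNReal.inv_ne_zero.2 (ENNReal.natCast_ne_top (Fintype.card α))) ?_
    rw [← hν a]
    exact measure_mono_null (Set.singleton_subset_iff.2 ha) h

lemma ae_not_bddBelow_intSum_of_uniform {α : Type*} [Fintype α] [MeasurableSpace α]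
    [MeasurableSingletonClass α] {s : ℕ → Ω → α}
    (hs : ∀ n, Measurable (s n))
    (hcyl : ∀ (n : ℕ) (c : ℕ → α),
      P {ω | ∀ i < n, s i ω = c i} = (Fintype.card α : ℝ≥0∞)⁻¹ ^ n)
    {f : α → ℤ} (hf : ∑ a, f a = 0) (hf0 : f ≠ 0) :
    ∀ᵐ ω ∂P, ¬BddBelow (Set.range fun n ↦ ∑ i ∈ Finset.range n, f (s i ω)) := by
  have hcast : (fun a ↦ (f a : ℝ)) ≠ 0 := fun h ↦
    hf0 (funext fun a ↦ Int.cast_eq_zero.1 (congrFun h a))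
  filter_upwards [ae_not_bddBelow_sum_of_uniform hs hcyl (by exact_mod_cast hf) hcast]
    with ω hω hbelow
  refine hω ((Int.cast_mono.map_bddBelow hbelow).mono ?_)
  rintro _ ⟨n, rfl⟩
  exact ⟨_, ⟨n, rfl⟩, by push_cast; rfl⟩

end IndependentSequences

section IntegerSequences

lemma exists_ge_eq_zero_of_not_bddBelow_sum {z d : ℕ → ℤ} (hd : ∀ n, -1 ≤ d n)
    (hz : ∀ n, 0 < z n → z (n + 1) = z n + d n)
    (hsum : ¬BddBelow (Set.range fun n ↦ ∑ i ∈ Finset.range n, d i)) {N : ℕ} (hN : 0 < z N) :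
    ∃ n ≥ N, z n = 0 := by
  by_contra! hne
  have hstay : ∀ n ≥ N, 0 < z n ∧
      z n - ∑ i ∈ Finset.range n, d i = z N - ∑ i ∈ Finset.range N, d i := by
    intro n hn
    induction n, hn using Nat.le_induction with
    | base => exact ⟨hN, rfl⟩
    | succ n hn ih =>
      have hstep := hz n ih.1
      have hnext := hne (n + 1) (by lia)
      have hdn := hd n
      rw [Finset.sum_range_succ]
      lia
  refine hsum (isBoundedUnder_of_eventually_ge (a := ∑ i ∈ Finset.range N, d i - z N)
    (eventually_atTop.2 ⟨N, fun n hn ↦ ?_⟩)).bddBelow_range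
  have := hstay n hn
  lia

end IntegerSequences

section FloorOfWalk

/-- The increments of the integer part under the four moves of `stepQ`, at a point of `[1, ∞)`. -/
def floorIncRight : Fin 4 → ℤ := ![-1, 1, -1, 1]

/-- The increments of the integer part under the four moves of `stepQ`, at a point of `(-∞, 0)`. -/
def floorIncLeft : Fin 4 → ℤ := ![-1, 1, 0, 0]

lemma neg_one_le_floorIncRight (i : Fin 4) : -1 ≤ floorIncRight i := by
  fin_cases i <;> simp [floorIncRight]

lemma floorIncLeft_le_one (i : Fin 4) : floorIncLeft i ≤ 1 := by
  fin_cases i <;> simp [floorIncLeft]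

lemma floor_stepQ_of_one_le {x : ℚ} (hx : 1 ≤ x) (i : Fin 4) :
    ⌊stepQ i x⌋ = ⌊x⌋ + floorIncRight i := by
  have hx0 : ¬x ≤ 0 := by linarith
  fin_cases i
  · simp [stepQ, floorIncRight, ← sub_eq_add_neg]
  · simp [stepQ, floorIncRight]
  · rcases lt_trichotomy x 2 with h | rfl | h
    · have hfloor : ⌊x⌋ = 1 := Int.floor_eq_iff.2 ⟨by simpa, by norm_num; linarith⟩
      have hhalf : ⌊x / 2⌋ = 0 := Int.floor_eq_zero_iff.2 ⟨by linarith, by linarith⟩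
      simp [stepQ, floorIncRight, hx0, h.le, hfloor, hhalf]
    · norm_num [stepQ, floorIncRight]
    · simp [stepQ, floorIncRight, hx0, h.not_ge, ← sub_eq_add_neg]
  · rcases hx.eq_or_lt with rfl | h
    · norm_num [stepQ, floorIncRight]
    · simp [stepQ, floorIncRight, hx0, h.not_ge]

lemma floor_stepQ_of_nonpos {x : ℚ} (hx : x ≤ 0) (i : Fin 4) :
    ⌊stepQ i x⌋ = ⌊x⌋ + floorIncLeft i := by
  fin_cases i <;> simp [stepQ, floorIncLeft, hx, ← sub_eq_add_neg]

lemma infinite_visits_of_not_bddBelow {s : ℕ → Fin 4} (γ₀ : ℚ)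
    (hright : ¬BddBelow (Set.range fun n ↦ ∑ i ∈ Finset.range n, floorIncRight (s i)))
    (hleft : ¬BddBelow (Set.range fun n ↦ ∑ i ∈ Finset.range n, -floorIncLeft (s i))) :
    {n : ℕ | 0 ≤ walkQ s γ₀ n ∧ walkQ s γ₀ n < 1}.Infinite := by
  refine Nat.frequently_atTop_iff_infinite.1 (frequently_atTop.2 fun N ↦ ?_)
  suffices ∃ n ≥ N, ⌊walkQ s γ₀ n⌋ = 0 by simpa only [Int.floor_eq_zero_iff, Set.mem_Ico] using this
  rcases lt_trichotomy ⌊walkQ s γ₀ N⌋ 0 with hneg | hzero | hpos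
  · obtain ⟨n, hn, hz⟩ := exists_ge_eq_zero_of_not_bddBelow_sum
      (z := fun n ↦ -⌊walkQ s γ₀ n⌋) (fun n ↦ neg_le_neg (floorIncLeft_le_one (s n)))
      (fun n h ↦ by
        rw [walkQ, floor_stepQ_of_nonpos (Int.floor_lt_zero.1 (neg_pos.1 h)).le, neg_add])
      hleft (neg_pos.2 hneg)
    exact ⟨n, hn, neg_eq_zero.1 hz⟩
  · exact ⟨N, le_rfl, hzero⟩
  · exact exists_ge_eq_zero_of_not_bddBelow_sum (fun n ↦ neg_one_le_floorIncRight (s n))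
      (fun n h ↦ floor_stepQ_of_one_le (Int.floor_pos.1 h) (s n)) hright hpos

end FloorOfWalk

theorem interval_recurrent_for_simple_random_walk_general
    {Ω : Type*} [MeasurableSpace Ω] (P : Measure Ω)
    (s : ℕ → Ω → Fin 4)
    (hmeas : ∀ n i, MeasurableSet {ω | s n ω = i})
    (hiid : ∀ (n : ℕ) (c : ℕ → Fin 4),
      P {ω | ∀ i < n, s i ω = c i} = (4 : ENNReal)⁻¹ ^ n)
    (γ₀ : ℚ) :
    ∀ᵐ ω ∂P,
      {n : ℕ | 0 ≤ walkQ (fun i ↦ s i ω) γ₀ n ∧ walkQ (fun i ↦ s i ω) γ₀ n < 1}.Infinite := by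
  have hs (n : ℕ) : Measurable (s n) := measurable_to_countable' (hmeas n)
  have hright := ae_not_bddBelow_intSum_of_uniform hs (by simpa using hiid)
    (f := floorIncRight) (by decide) (by decide)
  have hleft := ae_not_bddBelow_intSum_of_uniform hs (by simpa using hiid)
    (f := fun a ↦ -floorIncLeft a) (by decide) (by decide)
  filter_upwards [hright, hleft] with ω hright hleft
  exact infinite_visits_of_not_bddBelow γ₀ hright hleft

/-- The interval `[0,1)` is recurrent for the simple random walk on the Schreier graph `Γ`:
for the walk started at `γ₀ = 0`, almost surely there are infinitely many `n` with
`0 ≤ γ_n < 1`.  The probability space is any space carrying an i.i.d. sequence `s` of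
uniformly distributed choices in `{1,2,3,4}` (i.e. the uniform product measure on
`{1,2,3,4}^ℕ`). -/
theorem interval_recurrent_for_simple_random_walk
    {Ω : Type*} [MeasurableSpace Ω] (P : Measure Ω) [IsProbabilityMeasure P]
    (s : ℕ → Ω → Fin 4)
    (hmeas : ∀ n i, MeasurableSet {ω | s n ω = i})
    (hiid : ∀ (n : ℕ) (c : ℕ → Fin 4),
      P {ω | ∀ i < n, s i ω = c i} = (4 : ENNReal)⁻¹ ^ n) :
    ∀ᵐ ω ∂P,
      {n : ℕ | 0 ≤ walkQ (fun i => s i ω) 0 n ∧ walkQ (fun i => s i ω) 0 n < 1}.Infinite :=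
  interval_recurrent_for_simple_random_walk_general P s hmeas hiid 0
end
end
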